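/- Let n ≥ 2, 1 ≤ k ≤ n-1 and 0 ≤ σ ≤ σ_n. Then m_k(1,σ) ≥ B_{n,k}(σ) := (1 − σ/σ_n)·T_{n-1}^{(k)}(1) + (σ/σ_n)·T_n^{(k)}(1). -/

import Mathlib

open Polynomial Set

/-- `k`-th derivative of the Chebyshev polynomial `T_m`, evaluated at `x`. -/
noncomputable def chebDeriv (m : ℤ) (k : ℕ) (x : ℝ) : ℝ :=
  (derivative^[k] (Polynomial.Chebyshev.T ℝ m)).eval x

/-- `σ_n = 2^(n-1) n! = T_n^{(n)}(1)`. -/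
noncomputable def sigmaN (n : ℕ) : ℝ := 2 ^ (n - 1) * (n.factorial : ℝ)

/-- `f` is `n` times differentiable on the set `s`. -/
def NTimesDiffOn (n : ℕ) (f : ℝ → ℝ) (s : Set ℝ) : Prop :=
  ∀ i < n, DifferentiableOn ℝ (iteratedDerivWithin i f s) s

/-- The class `W^n_∞(σ)` on `[-1,1]`. -/
def memW (n : ℕ) (σ : ℝ) (f : ℝ → ℝ) : Prop :=
  NTimesDiffOn n f (Icc (-1:ℝ) 1) ∧
  (∀ x ∈ Icc (-1:ℝ) 1, |f x| ≤ 1) ∧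
  (∀ x ∈ Icc (-1:ℝ) 1, |iteratedDerivWithin n f (Icc (-1:ℝ) 1) x| ≤ σ)

/-- `m_k(x,σ) = sup { |f^{(k)}(x)| : f ∈ W^n_∞(σ) }`. -/
noncomputable def mval (n k : ℕ) (x σ : ℝ) : ℝ :=
  sSup {y | ∃ f : ℝ → ℝ, memW n σ f ∧
    y = |iteratedDerivWithin k f (Icc (-1:ℝ) 1) x|}

/-- `m_k^*(x,σ) = sup { |f^{(k)}(x)| : f ∈ W^n_∞(σ), f^{(k+1)}(x) = 0 }`. -/
noncomputable def mstar (n k : ℕ) (x σ : ℝ) : ℝ :=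
  sSup {y | ∃ f : ℝ → ℝ, memW n σ f ∧
    iteratedDerivWithin (k+1) f (Icc (-1:ℝ) 1) x = 0 ∧
    y = |iteratedDerivWithin k f (Icc (-1:ℝ) 1) x|}

/-- `μ_k(x₀)`: best constant in the pointwise Markov inequality. -/
noncomputable def muk (n k : ℕ) (x : ℝ) : ℝ :=
  sSup {y | ∃ p : Polynomial ℝ, p.natDegree ≤ n ∧
    (∀ t ∈ Icc (-1:ℝ) 1, |p.eval t| ≤ 1) ∧
    y = |(derivative^[k] p).eval x|}

/-- `μ_k^*(x₀)`: best constant in the pointwise Schur-type inequality. -/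
noncomputable def mukStar (n k : ℕ) (x : ℝ) : ℝ :=
  sSup {y | ∃ p : Polynomial ℝ, p.natDegree ≤ n ∧
    (∀ t ∈ Icc (-1:ℝ) 1, |p.eval t| ≤ 1) ∧
    (derivative^[k+1] p).eval x = 0 ∧
    y = |(derivative^[k] p).eval x|}

/-!
With `s = σ / σ_n`, the polynomial `(1 - s) T_{n-1} + s T_n` is bounded by `1` on `[-1,1]` and has
constant `n`-th derivative `s σ_n = σ`, so it belongs to `W^n_∞(σ)` and its `k`-th derivative bounds
`m_k` from below, at every point of `[-1,1]`.

As `m_k` is a real supremum, which is `0` on unbounded sets, the derivatives `f^{(k)}` must also be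
bounded uniformly over the class. Mean values show that `f^{(k)}` is bounded somewhere in any
subinterval: the difference quotient of `f^{(k-1)}` between two points where it is bounded, taken
from two disjoint pieces of the subinterval, is a value of `f^{(k)}`. Starting from the bound on
`f^{(n)}`, the mean value inequality then bounds `f^{(n-1)}, …, f` on the whole interval.
-/

section PolynomialDerivatives

theorem iterate_derivative_eq_C_of_natDegree_le {R : Type*} [Semiring R] {p : R[X]} {n : ℕ}
    (hp : p.natDegree ≤ n) : derivative^[n] p = C ((n.factorial : R) * p.coeff n) := by
  ext m
  rw [coeff_iterate_derivative, coeff_C]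
  split_ifs with hm
  · simp [hm, Nat.descFactorial_self]
  · rw [coeff_eq_zero_of_natDegree_lt (by omega), smul_zero]

theorem iteratedDerivWithin_eval {𝕜 : Type*} [NontriviallyNormedField 𝕜] {s : Set 𝕜}
    (hs : UniqueDiffOn 𝕜 s) (p : 𝕜[X]) (k : ℕ) {x : 𝕜} (hx : x ∈ s) :
    iteratedDerivWithin k (fun t ↦ p.eval t) s x = (derivative^[k] p).eval x := by
  induction k generalizing x with
  | zero => simp
  | succ k ih =>
    rw [iteratedDerivWithin_succ, derivWithin_congr (fun _ hy ↦ ih hy) (ih hx),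
      Function.iterate_succ_apply']
    exact (derivative^[k] p).derivWithin (hs x hx)

theorem nTimesDiffOn_eval {s : Set ℝ} (hs : UniqueDiffOn ℝ s) (p : ℝ[X]) (n : ℕ) :
    NTimesDiffOn n (fun t ↦ p.eval t) s := fun i _ ↦
  (derivative^[i] p).differentiableOn.congr fun _ hx ↦ iteratedDerivWithin_eval hs p i hx

end PolynomialDerivatives

section UniformBounds

variable {a b c d σ : ℝ} {f : ℝ → ℝ} {k m n : ℕ} {s : Set ℝ} {x : ℝ}

theorem NTimesDiffOn.mono_order (hf : NTimesDiffOn n f s) (hmn : m ≤ n) : NTimesDiffOn m f s :=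
  fun i hi ↦ hf i (hi.trans_le hmn)

theorem NTimesDiffOn.hasDerivWithinAt (hf : NTimesDiffOn n f s) (hm : m < n) (hx : x ∈ s) :
    HasDerivWithinAt (iteratedDerivWithin m f s) (iteratedDerivWithin (m + 1) f s x) s x := by
  rw [iteratedDerivWithin_succ]
  exact (hf m hm x hx).hasDerivWithinAt

theorem NTimesDiffOn.exists_iteratedDerivWithin_eq_slope (hf : NTimesDiffOn n f (Icc a b))
    (hm : m < n) (hac : a ≤ c) (hcd : c < d) (hdb : d ≤ b) :
    ∃ ξ ∈ Ioo c d, iteratedDerivWithin (m + 1) f (Icc a b) ξ =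
      (iteratedDerivWithin m f (Icc a b) d - iteratedDerivWithin m f (Icc a b) c) / (d - c) := by
  refine exists_hasDerivAt_eq_slope _ _ hcd
    ((hf m hm).continuousOn.mono (Icc_subset_Icc hac hdb)) fun x hx ↦ ?_
  have hax : a < x := hac.trans_lt hx.1
  have hxb : x < b := hx.2.trans_le hdb
  exact (hf.hasDerivWithinAt hm ⟨hax.le, hxb.le⟩).hasDerivAt (Icc_mem_nhds hax hxb)

theorem exists_bound_iteratedDerivWithin_at_some_point (M : ℝ) (m : ℕ)
    (hac : a ≤ c) (hcd : c < d) (hdb : d ≤ b) :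
    ∃ K, ∀ f, NTimesDiffOn m f (Icc a b) → (∀ x ∈ Icc a b, |f x| ≤ M) →
      ∃ ξ ∈ Icc c d, |iteratedDerivWithin m f (Icc a b) ξ| ≤ K := by
  induction m generalizing c d with
  | zero => exact ⟨M, fun f _ hM ↦ ⟨c, ⟨le_rfl, hcd.le⟩, by simpa using hM c ⟨hac, by linarith⟩⟩⟩
  | succ m ih =>
    obtain ⟨u, hcu, hud⟩ := exists_between hcd
    obtain ⟨v, huv, hvd⟩ := exists_between hud
    obtain ⟨K₁, hK₁⟩ := ih hac hcu (by linarith)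
    obtain ⟨K₂, hK₂⟩ := ih (by linarith : a ≤ v) hvd hdb
    refine ⟨(K₂ + K₁) / (v - u), fun f hf hM ↦ ?_⟩
    obtain ⟨p, hp, hpK⟩ := hK₁ f (hf.mono_order m.le_succ) hM
    obtain ⟨q, hq, hqK⟩ := hK₂ f (hf.mono_order m.le_succ) hM
    have hgap : v - u ≤ q - p := by linarith [hp.2, hq.1]
    obtain ⟨ξ, hξ, hslope⟩ := hf.exists_iteratedDerivWithin_eq_slope m.lt_succ_self
      (hac.trans hp.1) (by linarith : p < q) (hq.2.trans hdb)
    refine ⟨ξ, ⟨hp.1.trans hξ.1.le, hξ.2.le.trans hq.2⟩, ?_⟩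
    rw [hslope, abs_div, abs_of_pos (by linarith : 0 < q - p)]
    have hnum := (abs_sub _ _).trans (add_le_add hqK hpK)
    exact div_le_div₀ ((abs_nonneg _).trans hnum) hnum (by linarith) hgap

theorem exists_bound_iteratedDerivWithin (hab : a < b) (M σ : ℝ) (hkn : k ≤ n) :
    ∃ K, ∀ f, NTimesDiffOn n f (Icc a b) → (∀ x ∈ Icc a b, |f x| ≤ M) →
      (∀ x ∈ Icc a b, |iteratedDerivWithin n f (Icc a b) x| ≤ σ) →
      ∀ x ∈ Icc a b, |iteratedDerivWithin k f (Icc a b) x| ≤ K := by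
  induction hkn using Nat.decreasingInduction with
  | self => exact ⟨σ, fun f _ _ hσ ↦ hσ⟩
  | of_succ k hkn ih =>
    obtain ⟨K, hK⟩ := ih
    obtain ⟨L, hL⟩ := exists_bound_iteratedDerivWithin_at_some_point M k le_rfl hab le_rfl
    refine ⟨L + K * (b - a), fun f hf hM hσ x hx ↦ ?_⟩
    obtain ⟨ξ, hξ, hξL⟩ := hL f (hf.mono_order hkn.le) hM
    have hmean := (convex_Icc a b).norm_image_sub_le_of_norm_hasDerivWithin_le
      (fun y hy ↦ hf.hasDerivWithinAt hkn hy) (hK f hf hM hσ) hξ hx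
    have hK0 : 0 ≤ K := (abs_nonneg _).trans (hK f hf hM hσ x hx)
    calc |iteratedDerivWithin k f (Icc a b) x|
        ≤ |iteratedDerivWithin k f (Icc a b) ξ| +
          |iteratedDerivWithin k f (Icc a b) x - iteratedDerivWithin k f (Icc a b) ξ| := by
          rw [add_comm]; exact sub_le_iff_le_add.1 (abs_sub_abs_le_abs_sub _ _)
      _ ≤ L + K * |x - ξ| := add_le_add hξL hmean
      _ ≤ L + K * (b - a) := by gcongr; exact abs_sub_le_of_le_of_le hx.1 hx.2 hξ.1 hξ.2

theorem memW.abs_iteratedDerivWithin_le_mval (hf : memW n σ f) (hkn : k ≤ n)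
    (hx : x ∈ Icc (-1 : ℝ) 1) :
    |iteratedDerivWithin k f (Icc (-1 : ℝ) 1) x| ≤ mval n k x σ := by
  obtain ⟨K, hK⟩ := exists_bound_iteratedDerivWithin (by norm_num : (-1 : ℝ) < 1) 1 σ hkn
  refine le_csSup ⟨K, ?_⟩ ⟨f, hf, rfl⟩
  rintro _ ⟨g, ⟨hg, hg1, hgσ⟩, rfl⟩
  exact hK g hg hg1 hgσ x hx

end UniformBounds

section ChebyshevMix

variable {n : ℕ} {s x : ℝ}

theorem sigmaN_pos (n : ℕ) : 0 < sigmaN n := by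
  unfold sigmaN
  positivity

theorem iterate_derivative_chebyshevT_self (n : ℕ) :
    derivative^[n] (Chebyshev.T ℝ n) = C (sigmaN n) := by
  have hdeg : (Chebyshev.T ℝ n).natDegree = n := by simp
  have hlead : (Chebyshev.T ℝ n).coeff n = 2 ^ (n - 1) := by
    simpa [leadingCoeff] using Chebyshev.leadingCoeff_T ℝ n
  rw [iterate_derivative_eq_C_of_natDegree_le hdeg.le, hlead, sigmaN, mul_comm]

/-- The combination `(1 - s) T_{n-1} + s T_n`, convex for `0 ≤ s ≤ 1`, which for `s = σ / σ_n` is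
the competitor in `W^n_∞(σ)` behind the lower bound for `m_k`. -/
noncomputable def chebMix (n : ℕ) (s : ℝ) : ℝ[X] :=
  C (1 - s) * Chebyshev.T ℝ ((n : ℤ) - 1) + C s * Chebyshev.T ℝ n

theorem iterate_derivative_chebMix (n k : ℕ) (s : ℝ) :
    derivative^[k] (chebMix n s) = C (1 - s) * derivative^[k] (Chebyshev.T ℝ ((n : ℤ) - 1)) +
      C s * derivative^[k] (Chebyshev.T ℝ n) := by
  rw [chebMix, iterate_map_add, iterate_derivative_C_mul, iterate_derivative_C_mul]

theorem eval_iterate_derivative_chebMix (n k : ℕ) (s x : ℝ) :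
    (derivative^[k] (chebMix n s)).eval x =
      (1 - s) * chebDeriv ((n : ℤ) - 1) k x + s * chebDeriv n k x := by
  simp only [iterate_derivative_chebMix, eval_add, eval_mul, eval_C, chebDeriv]

theorem iterate_derivative_chebMix_self (hn : 1 ≤ n) (s : ℝ) :
    derivative^[n] (chebMix n s) = C (s * sigmaN n) := by
  have hlow : derivative^[n] (Chebyshev.T ℝ ((n : ℤ) - 1)) = 0 :=
    iterate_derivative_eq_zero (by rw [Chebyshev.natDegree_T]; omega)
  rw [iterate_derivative_chebMix, hlow, iterate_derivative_chebyshevT_self, mul_zero, zero_add,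
    C_mul]

theorem abs_eval_chebMix_le_one (n : ℕ) (hs : s ∈ Icc (0 : ℝ) 1) (hx : x ∈ Icc (-1 : ℝ) 1) :
    |(chebMix n s).eval x| ≤ 1 := by
  have hT (m : ℤ) : (Chebyshev.T ℝ m).eval x ∈ Icc (-1 : ℝ) 1 :=
    abs_le.1 (Chebyshev.abs_eval_T_real_le_one m (abs_le.2 hx))
  have hmix := convex_Icc (-1 : ℝ) 1 (hT (n - 1)) (hT n) (sub_nonneg.2 hs.2) hs.1
    (sub_add_cancel 1 s)
  simpa [chebMix] using abs_le.2 hmix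

theorem memW_chebMix (hn : 1 ≤ n) (hs : s ∈ Icc (0 : ℝ) 1) :
    memW n (s * sigmaN n) (fun t ↦ (chebMix n s).eval t) := by
  have huniq : UniqueDiffOn ℝ (Icc (-1 : ℝ) 1) := uniqueDiffOn_Icc (by norm_num)
  refine ⟨nTimesDiffOn_eval huniq _ n, fun x hx ↦ abs_eval_chebMix_le_one n hs hx, fun x hx ↦ ?_⟩
  rw [iteratedDerivWithin_eval huniq _ n hx, iterate_derivative_chebMix_self hn, eval_C]
  exact (abs_of_nonneg (mul_nonneg hs.1 (sigmaN_pos n).le)).le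

end ChebyshevMix

theorem endpoint_lower_bound_general (n k : ℕ) (σ x : ℝ) (hn : 1 ≤ n) (hkn : k ≤ n)
    (hσ0 : 0 ≤ σ) (hσn : σ ≤ sigmaN n) (hx : x ∈ Icc (-1 : ℝ) 1) :
    |(1 - σ / sigmaN n) * chebDeriv ((n : ℤ) - 1) k x + (σ / sigmaN n) * chebDeriv n k x| ≤
      mval n k x σ := by
  have hs : σ / sigmaN n ∈ Icc (0 : ℝ) 1 :=
    ⟨div_nonneg hσ0 (sigmaN_pos n).le, (div_le_one (sigmaN_pos n)).2 hσn⟩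
  have hmem := memW_chebMix hn hs
  rw [div_mul_cancel₀ σ (sigmaN_pos n).ne'] at hmem
  rw [← eval_iterate_derivative_chebMix,
    ← iteratedDerivWithin_eval (uniqueDiffOn_Icc (by norm_num)) _ k hx]
  exact hmem.abs_iteratedDerivWithin_le_mval hkn hx

/-- lower bound `m_k(1,σ) ≥ (1-σ/σ_n)·T_{n-1}^{(k)}(1) + (σ/σ_n)·T_n^{(k)}(1)`. -/
theorem endpoint_lower_bound (n k : ℕ) (σ : ℝ) (hn : 2 ≤ n)
    (hk1 : 1 ≤ k) (hk2 : k ≤ n - 1) (hσ0 : 0 ≤ σ) (hσn : σ ≤ sigmaN n) :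
    mval n k 1 σ ≥
      (1 - σ / sigmaN n) * chebDeriv ((n:ℤ) - 1) k 1 + (σ / sigmaN n) * chebDeriv n k 1 := by
  exact (le_abs_self _).trans
    (endpoint_lower_bound_general n k σ 1 (by omega) (by omega) hσ0 hσn (by simp))
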